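/- arXiv:0905.3846 — 4 statements merged into one kernel-verified Lean document; each statement's English description precedes it below -/
import Mathlib

section
/- Let Q be a finite unipotent quasigroup, i.e. there is a ∈ Q with x · x = a for all x ∈ Q. Then the track φ_a is special: for every i ∈ Q with i ≠ a, the cycle type of φ_i differs from the cycle type of φ_a. -/
/-!
By left cancellation, the fixed points of the track of `i` are the square roots of `i`. If every
element squares to `a`, the track of `a` is therefore the identity, whose only conjugate is itself,
while no other track has a fixed point. On a finite set, being conjugate means having the same
cycle type.
-/

/-- `σ` is a track (right middle translation) of the multiplication at `i`. Such a `σ` is unique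
when left multiplications are injective; the definition itself does not ask for this. -/
def IsTrack {Q : Type*} [Mul Q] (i : Q) (σ : Equiv.Perm Q) : Prop :=
  ∀ x : Q, x * σ x = i

namespace IsTrack

variable {Q : Type*} [Mul Q] [IsLeftCancelMul Q] {i : Q} {σ : Equiv.Perm Q}

theorem apply_eq_self_iff (hσ : IsTrack i σ) (x : Q) : σ x = x ↔ x * x = i := by
  rw [← hσ x, mul_right_inj, eq_comm]

theorem eq_one_iff (hσ : IsTrack i σ) : σ = 1 ↔ ∀ x : Q, x * x = i := by
  simp only [Equiv.ext_iff, Equiv.Perm.one_apply, hσ.apply_eq_self_iff]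

end IsTrack

theorem unipotent_special_track_general {Q : Type*} [Mul Q] [IsLeftCancelMul Q]
    (φ : Q → Equiv.Perm Q) (hφ : ∀ i : Q, IsTrack i (φ i))
    (a : Q) (ha : ∀ x : Q, x * x = a) :
    ∀ i : Q, i ≠ a → ¬ IsConj (φ i) (φ a) := by
  intro i hi hconj
  have track_a_eq_one : φ a = 1 := (hφ a).eq_one_iff.mpr ha
  have track_i_eq_one : φ i = 1 := by rwa [track_a_eq_one, isConj_one_left] at hconj
  have sq_eq_i : i * i = i := (hφ i).eq_one_iff.mp track_i_eq_one i
  exact hi (sq_eq_i.symm.trans (ha i))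

/-- In a finite unipotent quasigroup (`x * x = a` for all `x`), the
track `φ a` is special: for every `i ≠ a` the cycle type of `φ i` differs from
that of `φ a`. -/
theorem unipotent_special_track {Q : Type*} [Fintype Q] [DecidableEq Q] [Mul Q]
    (hL : ∀ a : Q, Function.Bijective (fun x : Q => a * x))
    (hR : ∀ a : Q, Function.Bijective (fun x : Q => x * a))
    (φ : Q → Equiv.Perm Q)
    (hφ : ∀ i x : Q, x * φ i x = i)
    (a : Q) (ha : ∀ x : Q, x * x = a) :
    ∀ i : Q, i ≠ a → (φ i).cycleType ≠ (φ a).cycleType := by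
  have : IsLeftCancelMul Q := ⟨fun x => (hL x).injective⟩
  exact fun i hi h =>
    unipotent_special_track_general φ hφ a ha i hi (Equiv.Perm.isConj_iff_cycleType_eq.mpr h)
end

section
/- There is no rigid quasigroup of order 3: every quasigroup on a three-element set admits an automorphism different from the identity. -/
/-!
Consider an operation `x * y = A x + B y + c` on a finite abelian group, with `A` and `B` additive.
If `1 - A - B` is not injective, translation by a nonzero element of its kernel is an automorphism.
Otherwise `1 - A - B` is surjective, a solution `p` of `p - A p - B p = c` is idempotent, and the
point reflection in `p` is an automorphism; it is not the identity unless the group has exponent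
dividing two.

Every quasigroup of order three is of this form over `ZMod 3`. A permutation of `ZMod 3` is affine,
so the operation is affine in each variable. The slope in the second variable is then an affine
function of the first that never vanishes, and hence is constant.
-/

open Function

/-- A binary operation is rigid if the identity is its only automorphism. Operations are curried
functions, so that the ring multiplication of `ZMod 3` does not clash with that of a quasigroup. -/
def IsRigid {Q : Type*} (f : Q → Q → Q) : Prop :=
  ∀ σ : Equiv.Perm Q, (∀ x y, σ (f x y) = f (σ x) (σ y)) → σ = 1

theorem IsRigid.transport {Q R : Type*} {f : Q → Q → Q} (hf : IsRigid f) (e : Q ≃ R) :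
    IsRigid fun x y => e (f (e.symm x) (e.symm y)) := by
  intro σ hσ
  have hconj : e.symm.permCongr σ = 1 := hf _ fun x y => by
    simpa [Equiv.permCongr_apply] using congrArg e.symm (hσ (e x) (e y))
  exact e.symm.permCongr.injective (hconj.trans (Equiv.permCongr_refl e.symm).symm)

section AffineOperation

variable {G : Type*} [AddCommGroup G] {A B : G →+ G} {c : G}

theorem not_isRigid_of_map_add_map_eq_self {v : G} (hv : A v + B v = v) (hv0 : v ≠ 0) :
    ¬ IsRigid fun x y => A x + B y + c := by
  intro h
  have htranslate : Equiv.addRight v = 1 := h _ fun x y => by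
    simp only [Equiv.coe_addRight, map_add]
    nth_rewrite 1 [← hv]
    abel
  exact hv0 (by simpa using Equiv.congr_fun htranslate 0)

theorem not_isRigid_of_idempotent {p : G} (hp : A p + B p + c = p) (hG : ∃ g : G, g + g ≠ 0) :
    ¬ IsRigid fun x y => A x + B y + c := by
  intro h
  obtain ⟨g, hg⟩ := hG
  have hreflect : Equiv.pointReflection p = 1 := h _ fun x y => by
    simp only [Equiv.pointReflection_apply, vsub_eq_sub, vadd_eq_add, map_add, map_sub]
    nth_rewrite 1 2 [← hp]
    abel
  have hfix : p - (p + g) + p = p + g := Equiv.congr_fun hreflect (p + g)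
  exact hg (by rw [← sub_eq_zero.mpr hfix.symm]; abel)

variable (A B c) in
theorem not_isRigid_affine [Finite G] (hG : ∃ g : G, g + g ≠ 0) :
    ¬ IsRigid fun x y => A x + B y + c := by
  let D : G →+ G := AddMonoidHom.id G - A - B
  by_cases hD : Injective D
  · obtain ⟨p, hp⟩ : ∃ p, p - A p - B p = c := Finite.surjective_of_injective hD c
    exact not_isRigid_of_idempotent (p := p) (by rw [← hp]; abel) hG
  · obtain ⟨v, hv, hv0⟩ : ∃ v, v - A v - B v = 0 ∧ v ≠ 0 := by
      simpa [injective_iff_map_eq_zero, D] using hD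
    exact not_isRigid_of_map_add_map_eq_self (by rwa [sub_sub, sub_eq_zero, eq_comm] at hv) hv0

end AffineOperation

/-- Affine self-maps `t ↦ m * t + n` of a ring, with the slope and the intercept expressed through
the values at `0` and `1`. -/
def IsAffine {R : Type*} [Ring R] (g : R → R) : Prop :=
  ∀ t, g t = (g 1 - g 0) * t + g 0

theorem IsAffine.sub {R : Type*} [Ring R] {g h : R → R} (hg : IsAffine g) (hh : IsAffine h) :
    IsAffine fun t => g t - h t := by
  intro t
  simp only [hg t, hh t]
  noncomm_ring

theorem IsAffine.eq_map_zero_of_forall_ne_zero {K : Type*} [DivisionRing K] {g : K → K}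
    (hg : IsAffine g) (h0 : ∀ t, g t ≠ 0) (t : K) : g t = g 0 := by
  have hslope : g 1 - g 0 = 0 := by
    by_contra hne
    apply h0 ((g 1 - g 0)⁻¹ * -g 0)
    rw [hg, mul_inv_cancel_left₀ hne, neg_add_cancel]
  rw [hg t, hslope, zero_mul, zero_add]

theorem eq_affine_of_isAffine_of_injective {K : Type*} [DivisionRing K] {f : K → K → K}
    (hrow : ∀ x, IsAffine (f x)) (hcol : ∀ y, IsAffine fun x => f x y)
    (hinj : ∀ x, Injective (f x)) (x y : K) :
    f x y = (f 1 0 - f 0 0) * x + (f 0 1 - f 0 0) * y + f 0 0 := by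
  have hslope : f x 1 - f x 0 = f 0 1 - f 0 0 :=
    ((hcol 1).sub (hcol 0)).eq_map_zero_of_forall_ne_zero
      (fun z => sub_ne_zero.mpr ((hinj z).ne one_ne_zero)) x
  have hzero : f x 0 = (f 1 0 - f 0 0) * x + f 0 0 := hcol 0 x
  rw [hrow x y, hslope, hzero]
  abel

theorem isAffine_of_injective_zmod_three {g : ZMod 3 → ZMod 3} (hg : Injective g) :
    IsAffine g := by
  have hsum : g 0 + g 1 + g 2 = 0 :=
    calc
      g 0 + g 1 + g 2 = ∑ t, g t := (Fin.sum_univ_three g).symm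
      _ = ∑ t : ZMod 3, t := (Finite.injective_iff_bijective.mp hg).sum_comp id
      _ = 0 := by decide
  have hthree : (3 : ZMod 3) = 0 := rfl
  intro t
  obtain rfl | rfl | rfl : t = 0 ∨ t = 1 ∨ t = 2 := by decide +revert
  · ring
  · ring
  · linear_combination hsum - g 1 * hthree

theorem not_isRigid_zmod_three {f : ZMod 3 → ZMod 3 → ZMod 3} (hrow : ∀ x, Injective (f x))
    (hcol : ∀ y, Injective fun x => f x y) : ¬ IsRigid f := by
  have hf : f = fun x y => (f 1 0 - f 0 0) * x + (f 0 1 - f 0 0) * y + f 0 0 :=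
    funext₂ <| eq_affine_of_isAffine_of_injective
      (fun x => isAffine_of_injective_zmod_three (hrow x))
      (fun y => isAffine_of_injective_zmod_three (hcol y)) hrow
  rw [hf]
  exact not_isRigid_affine (.mulLeft (f 1 0 - f 0 0)) (.mulLeft (f 0 1 - f 0 0)) (f 0 0)
    ⟨1, by decide⟩

/-- There is no rigid quasigroup of order 3: every quasigroup on a
three-element set admits a non-identity automorphism. -/
theorem order_three_not_rigid {Q : Type*} [Fintype Q] [Mul Q]
    (hcard : Fintype.card Q = 3)
    (hL : ∀ a : Q, Function.Bijective (fun x : Q => a * x))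
    (hR : ∀ a : Q, Function.Bijective (fun x : Q => x * a)) :
    ∃ α : Equiv.Perm Q, (∀ x y : Q, α (x * y) = α x * α y) ∧ α ≠ 1 := by
  let e : Q ≃ ZMod 3 := Fintype.equivOfCardEq (by rw [hcard, ZMod.card])
  have hnot : ¬ IsRigid fun x y : Q => x * y := fun hrigid =>
    not_isRigid_zmod_three
      (fun x => e.injective.comp ((hL (e.symm x)).injective.comp e.symm.injective))
      (fun y => e.injective.comp ((hR (e.symm y)).injective.comp e.symm.injective))
      (hrigid.transport e)
  simpa [IsRigid] using hnot
end

section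
/- Let Q be a finite quasigroup with tracks φ_i and spins φ_{ij} = φ_i ∘ φ_j⁻¹, and let Q* be its dual quasigroup with tracks ψ_i and spins ψ_{ij} = ψ_i ∘ ψ_j⁻¹. Then for all i, j ∈ Q, the spin ψ_{ij} has the same cycle type as φ_{ij}. -/
/-! Cancelling `φ i x` in `ψ i (φ i x) * φ i x = i = x * φ i x` shows that the dual track `ψ i` is
the inverse of `φ i`. Hence the dual spin is `(φ i)⁻¹ * φ j`, which is conjugate to
`φ j * (φ i)⁻¹`, the inverse of the original spin; inversion and conjugation both preserve the
cycle type. -/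

theorem dual_track_eq_inv_track {Q : Type*} [Mul Q] [IsRightCancelMul Q] {f g : Equiv.Perm Q}
    {i : Q} (hf : ∀ x, x * f x = i) (hg : ∀ x, g x * x = i) : g = f⁻¹ :=
  eq_inv_of_mul_eq_one_left <| Equiv.ext fun x =>
    mul_right_cancel ((hg (f x)).trans (hf x).symm)

theorem dual_spins_cycleType_general {Q : Type*} [Mul Q] [IsRightCancelMul Q]
    {φ ψ : Q → Equiv.Perm Q} (hφ : ∀ i x, x * φ i x = i) (hψ : ∀ i x, ψ i x * x = i) (i j : Q) :
    IsConj (ψ i * (ψ j)⁻¹) (φ i * (φ j)⁻¹)⁻¹ := by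
  rw [dual_track_eq_inv_track (hφ i) (hψ i), dual_track_eq_inv_track (hφ j) (hψ j), inv_inv,
    mul_inv_rev, inv_inv]
  exact isConj_iff.2 ⟨φ i, by rw [mul_inv_cancel_left]⟩

/-- The spins `ψ i ∘ (ψ j)⁻¹` of the dual quasigroup (`x * y = y · x`,
with tracks `ψ i`) have the same cycle types as the corresponding spins
`φ i ∘ (φ j)⁻¹` of the original finite quasigroup. -/
theorem dual_spins_cycleType {Q : Type*} [Fintype Q] [DecidableEq Q] [Mul Q]
    (hL : ∀ a : Q, Function.Bijective (fun x : Q => a * x))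
    (hR : ∀ a : Q, Function.Bijective (fun x : Q => x * a))
    (φ ψ : Q → Equiv.Perm Q)
    (hφ : ∀ i x : Q, x * φ i x = i)
    (hψ : ∀ i x : Q, ψ i x * x = i) :
    ∀ i j : Q, (ψ i * (ψ j)⁻¹).cycleType = (φ i * (φ j)⁻¹).cycleType := by
  have : IsRightCancelMul Q := ⟨fun a => (hR a).injective⟩
  intro i j
  rw [← Equiv.Perm.cycleType_inv (φ i * (φ j)⁻¹)]
  exact Equiv.Perm.isConj_iff_cycleType_eq.1 (dual_spins_cycleType_general hφ hψ i j)
end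

section
/- Let Q be a finite quasigroup with spins φ_{ij} = φ_i ∘ φ_j⁻¹ and spectra Sp(Φ_i) defined as the multiset of cycle types of the spins φ_{ij} over all j ≠ i. If (α, β, γ) is an autotopism of Q, then Sp(Φ_i) = Sp(Φ_{γ(i)}) for every i ∈ Q. -/
/-! An isotopism `(α, β, γ)` transports tracks: `α x * β (φ i x) = γ (x * φ i x) = γ i`, so the
track of `γ i` is `β ∘ φ i ∘ α⁻¹`. In a spin the two factors `α` cancel, so the spin of `γ i` and
`γ j` is the spin of `i` and `j` conjugated by `β`, and has the same cycle type. Finally `γ` maps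
`{j | j ≠ i}` onto `{k | k ≠ γ i}`. -/

theorem cycleType_permCongr {P Q : Type*} [Fintype P] [DecidableEq P] [Fintype Q] [DecidableEq Q]
    (e : P ≃ Q) (σ : Equiv.Perm P) : (e.permCongr σ).cycleType = σ.cycleType := by
  let f : P ≃ {_y : Q // True} := e.trans (Equiv.subtypeUnivEquiv fun _ => trivial).symm
  have extend_eq : σ.extendDomain f = e.permCongr σ := by
    ext y
    exact σ.extendDomain_apply_subtype f trivial
  rw [← extend_eq, Equiv.Perm.cycleType_extendDomain]

theorem filter_ne_apply_equiv {P Q : Type*} [Fintype P] [DecidableEq P] [Fintype Q]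
    [DecidableEq Q] (e : P ≃ Q) (i : P) :
    Finset.univ.filter (fun k : Q => k ≠ e i) =
      (Finset.univ.filter (fun j : P => j ≠ i)).map e.toEmbedding := by
  ext k
  simp [Equiv.symm_apply_eq]

/-- The family `φ` consists of the tracks (right middle translations) of `Q`, `φ i` being the track
of `i`. -/
def IsTrackFamily {Q : Type*} [Mul Q] (φ : Q → Equiv.Perm Q) : Prop :=
  ∀ i x : Q, x * φ i x = i

/-- An isotopism `(α, β, γ)` between two sets with a multiplication, that is, an autotopism if
`P = Q`. -/
def IsIsotopism {P Q : Type*} [Mul P] [Mul Q] (α β γ : P ≃ Q) : Prop :=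
  ∀ x y : P, γ (x * y) = α x * β y

/-- The spin `φ_{ij}` of a family of permutations, which is meant to be a family of tracks. -/
def spin {Q : Type*} (φ : Q → Equiv.Perm Q) (i j : Q) : Equiv.Perm Q :=
  φ i * (φ j)⁻¹

/-- The spectrum `Sp(Φ_i)`. As in `Equiv.Perm.cycleType`, cycles of length one are not recorded. -/
def spinSpectrum {Q : Type*} [Fintype Q] [DecidableEq Q] (φ : Q → Equiv.Perm Q) (i : Q) :
    Multiset (Multiset ℕ) :=
  (Finset.univ.filter (fun j : Q => j ≠ i)).val.map (fun j => (spin φ i j).cycleType)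

namespace IsIsotopism

variable {P Q : Type*} [Mul P] [Mul Q] [IsLeftCancelMul Q] {α β γ : P ≃ Q}
  {φ : P → Equiv.Perm P} {ψ : Q → Equiv.Perm Q}

theorem track_apply (h : IsIsotopism α β γ) (hφ : IsTrackFamily φ) (hψ : IsTrackFamily ψ)
    (i x : P) : ψ (γ i) (α x) = β (φ i x) := by
  apply mul_left_cancel (a := α x)
  calc
    α x * ψ (γ i) (α x) = γ i := hψ (γ i) (α x)
    _ = γ (x * φ i x) := by rw [hφ i x]
    _ = α x * β (φ i x) := h x (φ i x)

theorem track_inv_apply (h : IsIsotopism α β γ) (hφ : IsTrackFamily φ) (hψ : IsTrackFamily ψ)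
    (j x : P) : (ψ (γ j))⁻¹ (β x) = α ((φ j)⁻¹ x) := by
  simp [Equiv.Perm.inv_def, Equiv.symm_apply_eq, h.track_apply hφ hψ]

theorem spin_eq_permCongr (h : IsIsotopism α β γ) (hφ : IsTrackFamily φ)
    (hψ : IsTrackFamily ψ) (i j : P) : spin ψ (γ i) (γ j) = β.permCongr (spin φ i j) := by
  ext y
  obtain ⟨x, rfl⟩ := β.surjective y
  calc
    ψ (γ i) ((ψ (γ j))⁻¹ (β x)) = ψ (γ i) (α ((φ j)⁻¹ x)) := by rw [h.track_inv_apply hφ hψ]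
    _ = β (φ i ((φ j)⁻¹ x)) := h.track_apply hφ hψ i _
    _ = β.permCongr (spin φ i j) (β x) := by simp [spin]

end IsIsotopism

theorem spectrum_autotopism_invariant_general {P Q : Type*} [Fintype P] [DecidableEq P]
    [Fintype Q] [DecidableEq Q] [Mul P] [Mul Q] [IsLeftCancelMul Q] {α β γ : P ≃ Q}
    {φ : P → Equiv.Perm P} {ψ : Q → Equiv.Perm Q} (h : IsIsotopism α β γ)
    (hφ : IsTrackFamily φ) (hψ : IsTrackFamily ψ) (i : P) :
    spinSpectrum φ i = spinSpectrum ψ (γ i) := by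
  have cycleType_spin (j : P) : (spin ψ (γ i) (γ j)).cycleType = (spin φ i j).cycleType := by
    rw [h.spin_eq_permCongr hφ hψ, cycleType_permCongr]
  simp only [spinSpectrum, filter_ne_apply_equiv, Finset.map_val, Multiset.map_map,
    Function.comp_apply, Equiv.coe_toEmbedding, cycleType_spin]

/-- If `(α, β, γ)` is an autotopism of a finite quasigroup `Q`, then
the spectrum `Sp(Φ i)` — the multiset of cycle types of the spins `φ i ∘ (φ j)⁻¹`
over all `j ≠ i` — satisfies `Sp(Φ i) = Sp(Φ (γ i))` for every `i`. -/
theorem spectrum_autotopism_invariant {Q : Type*} [Fintype Q] [DecidableEq Q] [Mul Q]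
    (hL : ∀ a : Q, Function.Bijective (fun x : Q => a * x))
    (hR : ∀ a : Q, Function.Bijective (fun x : Q => x * a))
    (φ : Q → Equiv.Perm Q)
    (hφ : ∀ i x : Q, x * φ i x = i)
    (α β γ : Equiv.Perm Q)
    (hat : ∀ x y : Q, γ (x * y) = α x * β y) :
    ∀ i : Q,
      (Finset.univ.filter (fun j : Q => j ≠ i)).val.map
        (fun j => (φ i * (φ j)⁻¹).cycleType) =
      (Finset.univ.filter (fun j : Q => j ≠ γ i)).val.map
        (fun j => (φ (γ i) * (φ j)⁻¹).cycleType) :=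
  have : IsLeftCancelMul Q := ⟨fun a => (hL a).injective⟩
  spectrum_autotopism_invariant_general (α := α) (β := β) hat hφ hφ
end
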